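/- Nilpotency from small S-arithmetic Mahler measure (Lemma in §6.5): There exists a constant β with 0 < β < 1 depending only on d such that the following holds. Let S be any finite set of places of ℚ containing the archimedean place, let ℤ_S = {r ∈ ℚ : |r|_q ≤ 1 for every prime q ∉ S} be the ring of S-integers, and let w be a d × d matrix with entries in ℤ_S. If there exist elements g_v ∈ SL_d(ℚ_v) for each v ∈ S such that ∏_{v ∈ S} ‖g_v w g_v^{-1}‖_v ≤ β, then w is nilpotent. -/

import Mathlib

/-- The max norm `‖M‖_p` (maximum of the `p`-adic norms of the entries) of a matrix over
`ℚ_[p]`. -/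
noncomputable def padicMatSup {d p : ℕ} [Fact p.Prime]
    (M : Matrix (Fin d) (Fin d) ℚ_[p]) : ℝ :=
  ⨆ ij : Fin d × Fin d, ‖M ij.1 ij.2‖

/-- The quantity `‖g w g⁻¹‖_p` for a rational matrix `w` and `g ∈ GL_d(ℚ_[p])`. -/
noncomputable def padicConjNorm {d p : ℕ} [Fact p.Prime]
    (w : Matrix (Fin d) (Fin d) ℚ) (g : Matrix (Fin d) (Fin d) ℚ_[p]) : ℝ :=
  padicMatSup (g * w.map (Rat.cast : ℚ → ℚ_[p]) * g⁻¹)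

/-- `g ∈ SL_d(ℚ_[p])`: the matrix `g` over `ℚ_[p]` has determinant `1`. -/
def padicDetOne {d p : ℕ} [Fact p.Prime] (g : Matrix (Fin d) (Fin d) ℚ_[p]) : Prop :=
  g.det = 1

/-- The quantity `‖g w g⁻¹‖_∞` for a rational matrix `w` and `g ∈ GL_d(ℝ)`. -/
noncomputable def realConjNorm {d : ℕ} (w : Matrix (Fin d) (Fin d) ℚ)
    (g : Matrix (Fin d) (Fin d) ℝ) : ℝ :=
  ⨆ ij : Fin d × Fin d, |(g * w.map (Rat.cast : ℚ → ℝ) * g⁻¹) ij.1 ij.2|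

/-!
Conjugation by `g_v` preserves the traces of the powers of `w`, so for `k ≥ 1` the `v`-adic
absolute value of `tr (w ^ k)` is at most `‖g_v w g_v⁻¹‖_v ^ k`, with an additional factor `d ^ k`
at the archimedean place. If `d * ∏ ‖g_v w g_v⁻¹‖_v < 1`, then the product of the absolute values of
`tr (w ^ k)` over `S` is less than `1`. Since `tr (w ^ k)` is an `S`-integer, it must vanish, and in
characteristic zero a matrix all of whose positive powers have trace zero is nilpotent.
-/

section NilpotentTrace

open Polynomial

/-- In an Artinian ring the chain of ideals `(a ^ n)` stabilizes, say `a ^ n = a ^ (n + 1) * y`;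
then `(a * y) ^ (n + 1)` is the idempotent sought. -/
lemma exists_isIdempotentElem_mul_pow_mul_eq {R : Type*} [CommRing R] [IsArtinianRing R] (a : R) :
    ∃ (n : ℕ) (b : R), IsIdempotentElem (a * b) ∧ a ^ n * (a * b) = a ^ n := by
  obtain ⟨n, y, hy : a ^ (n + 1) * y = a ^ n * 1⟩ :=
    IsArtinian.exists_pow_succ_smul_dvd a (1 : R)
  have pow_mul_mul_pow : ∀ k, a ^ n * (a * y) ^ k = a ^ n := fun k ↦ by
    induction k with
    | zero => simp
    | succ k ih => linear_combination (a * y) * ih + hy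
  refine ⟨n, a ^ n * y ^ (n + 1), ?_, ?_⟩
  · rw [IsIdempotentElem]
    linear_combination a * y ^ (n + 1) * pow_mul_mul_pow (n + 1)
  · linear_combination pow_mul_mul_pow (n + 1)

open scoped IsMulCommutative in
lemma exists_isIdempotentElem_mul_aeval (K : Type*) {A : Type*} [Field K] [Ring A] [Algebra K A]
    [FiniteDimensional K A] (a : A) :
    ∃ (n : ℕ) (p : K[X]), IsIdempotentElem (a * aeval a p) ∧
      a ^ n * (a * aeval a p) = a ^ n := by
  have : IsArtinianRing (Algebra.adjoin K {a}) := .of_finite K _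
  obtain ⟨n, ⟨b, hb⟩, idempotent, pow_mul_eq⟩ := exists_isIdempotentElem_mul_pow_mul_eq
    (⟨a, Algebra.self_mem_adjoin_singleton K a⟩ : Algebra.adjoin K {a})
  obtain ⟨p, rfl⟩ := (Algebra.adjoin_singleton_eq_range_aeval K a).le hb
  exact ⟨n, p, congrArg Subtype.val idempotent, congrArg Subtype.val pow_mul_eq⟩

variable {n K : Type*} [Fintype n]

lemma eq_zero_of_isIdempotentElem_of_trace_eq_zero [Field K] [CharZero K] {E : Matrix n n K}
    (hE : IsIdempotentElem E) (htrace : E.trace = 0) : E = 0 := by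
  classical
  have toLin_eq_zero : Matrix.toLin' E = 0 :=
    (LinearMap.IsIdempotentElem.trace_eq_zero_iff (hE.map (Matrix.toLinAlgEquiv' (R := K)))).1
      ((Matrix.trace_toLin'_eq E).trans htrace)
  simpa using toLin_eq_zero

variable [DecidableEq n]

lemma trace_mul_aeval_eq_zero [CommSemiring K] {M : Matrix n n K}
    (hM : ∀ k ≠ 0, (M ^ k).trace = 0) (p : K[X]) : (M * aeval M p).trace = 0 := by
  simp only [aeval_eq_sum_range, Finset.mul_sum, Matrix.mul_smul, ← pow_succ', Matrix.trace_sum,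
    Matrix.trace_smul, hM _ (Nat.succ_ne_zero _), smul_zero, Finset.sum_const_zero]

lemma isNilpotent_of_forall_trace_pow_eq_zero [Field K] [CharZero K] {M : Matrix n n K}
    (hM : ∀ k ≠ 0, (M ^ k).trace = 0) : IsNilpotent M := by
  obtain ⟨m, p, idempotent, pow_mul_eq⟩ := exists_isIdempotentElem_mul_aeval K M
  have mul_aeval_eq_zero : M * aeval M p = 0 :=
    eq_zero_of_isIdempotentElem_of_trace_eq_zero idempotent (trace_mul_aeval_eq_zero hM p)
  exact ⟨m, by rw [← pow_mul_eq, mul_aeval_eq_zero, mul_zero]⟩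

end NilpotentTrace

section TracePow

variable {n R S : Type*} [Fintype n] [DecidableEq n]

lemma trace_map_pow [Semiring R] [Semiring S] (f : R →+* S) (M : Matrix n n R) (k : ℕ) :
    ((M.map f) ^ k).trace = f (M ^ k).trace := by
  rw [AddMonoidHom.map_trace, Matrix.map_pow]

lemma trace_conj_pow [CommRing R] {g : Matrix n n R} (hg : IsUnit g.det) (M : Matrix n n R)
    (k : ℕ) : ((g * M * g⁻¹) ^ k).trace = (M ^ k).trace := by
  obtain ⟨u, rfl⟩ := (Matrix.isUnit_iff_isUnit_det g).2 hg
  rw [← Matrix.coe_units_inv, Units.conj_pow, Matrix.trace_units_conj]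

end TracePow

section NormTracePow

open scoped Matrix.Norms.Elementwise

variable {n R : Type*} [Fintype n] [SeminormedRing R] {c : ℝ}

-- Keeping `c` abstract treats all places at once: `c` is the size of the matrices at the
-- archimedean place and `1` at the ultrametric ones.
lemma norm_mul_le_of_norm_sum_le (hc₀ : 0 ≤ c) (hc : ∀ f : n → R, ‖∑ i, f i‖ ≤ c * ‖f‖)
    (A B : Matrix n n R) : ‖A * B‖ ≤ c * (‖A‖ * ‖B‖) := by
  refine (Matrix.norm_le_iff (by positivity)).2 fun i j ↦ ?_
  rw [Matrix.mul_apply]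
  refine (hc _).trans (mul_le_mul_of_nonneg_left ?_ hc₀)
  refine (pi_norm_le_iff_of_nonneg (by positivity)).2 fun l ↦ (norm_mul_le _ _).trans ?_
  gcongr <;> exact Matrix.norm_entry_le_entrywise_sup_norm _

lemma norm_trace_le_of_norm_sum_le (hc₀ : 0 ≤ c) (hc : ∀ f : n → R, ‖∑ i, f i‖ ≤ c * ‖f‖)
    (M : Matrix n n R) : ‖M.trace‖ ≤ c * ‖M‖ :=
  (hc _).trans <| mul_le_mul_of_nonneg_left
    ((pi_norm_le_iff_of_nonneg (norm_nonneg M)).2 fun i ↦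
      Matrix.norm_entry_le_entrywise_sup_norm M (i := i) (j := i)) hc₀

variable [DecidableEq n]

lemma norm_trace_pow_le_of_norm_sum_le (hc₀ : 0 ≤ c)
    (hc : ∀ f : n → R, ‖∑ i, f i‖ ≤ c * ‖f‖) (M : Matrix n n R) {k : ℕ} (hk : k ≠ 0) :
    ‖(M ^ k).trace‖ ≤ (c * ‖M‖) ^ k := by
  refine (norm_trace_le_of_norm_sum_le hc₀ hc _).trans ?_
  induction k, Nat.one_le_iff_ne_zero.2 hk using Nat.le_induction with
  | base => simp
  | succ k one_le ih =>
    calc c * ‖M ^ (k + 1)‖ ≤ c * (c * (‖M ^ k‖ * ‖M‖)) := by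
          rw [pow_succ]
          exact mul_le_mul_of_nonneg_left (norm_mul_le_of_norm_sum_le hc₀ hc _ _) hc₀
      _ = c * ‖M ^ k‖ * (c * ‖M‖) := by ring
      _ ≤ (c * ‖M‖) ^ k * (c * ‖M‖) :=
          mul_le_mul_of_nonneg_right (ih (Nat.one_le_iff_ne_zero.1 one_le)) (by positivity)
      _ = (c * ‖M‖) ^ (k + 1) := (pow_succ _ _).symm

lemma norm_trace_pow_le (M : Matrix n n R) {k : ℕ} (hk : k ≠ 0) :
    ‖(M ^ k).trace‖ ≤ (Fintype.card n * ‖M‖) ^ k :=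
  norm_trace_pow_le_of_norm_sum_le (Nat.cast_nonneg _)
    (fun f ↦ (norm_sum_le _ _).trans <| by simpa using Pi.sum_norm_apply_le_norm f) M hk

lemma norm_trace_pow_le_of_isUltrametricDist [IsUltrametricDist R] (M : Matrix n n R) {k : ℕ}
    (hk : k ≠ 0) : ‖(M ^ k).trace‖ ≤ ‖M‖ ^ k := by
  have norm_sum_le_norm (f : n → R) : ‖∑ i, f i‖ ≤ 1 * ‖f‖ := by
    rw [one_mul]
    exact IsUltrametricDist.norm_sum_le_of_forall_le_of_nonneg (norm_nonneg f)
      fun i _ ↦ norm_le_pi_norm f i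
  simpa using norm_trace_pow_le_of_norm_sum_le zero_le_one norm_sum_le_norm M hk

end NormTracePow

section ConjNorm

open scoped Matrix.Norms.Elementwise

variable {d : ℕ}

lemma iSup_norm_apply_eq_norm {m n R : Type*} [Fintype m] [Fintype n] [SeminormedAddCommGroup R]
    (M : Matrix m n R) : ⨆ ij : m × n, ‖M ij.1 ij.2‖ = ‖M‖ := by
  refine le_antisymm
    (Real.iSup_le (fun _ ↦ Matrix.norm_entry_le_entrywise_sup_norm M) (norm_nonneg M)) ?_
  refine (Matrix.norm_le_iff (Real.iSup_nonneg fun _ ↦ norm_nonneg _)).2 fun i j ↦ ?_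
  exact le_ciSup (f := fun ij : m × n ↦ ‖M ij.1 ij.2‖) (Set.finite_range _).bddAbove (i, j)

lemma realConjNorm_eq_norm (w : Matrix (Fin d) (Fin d) ℚ) (g : Matrix (Fin d) (Fin d) ℝ) :
    realConjNorm w g = ‖g * w.map (Rat.castHom ℝ) * g⁻¹‖ := by
  simp only [realConjNorm, ← Real.norm_eq_abs]
  exact iSup_norm_apply_eq_norm _

lemma abs_trace_pow_le_realConjNorm (w : Matrix (Fin d) (Fin d) ℚ)
    {g : Matrix (Fin d) (Fin d) ℝ} (hg : IsUnit g.det) {k : ℕ} (hk : k ≠ 0) :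
    |((w ^ k).trace : ℝ)| ≤ (d * realConjNorm w g) ^ k := by
  have h := norm_trace_pow_le (g * w.map (Rat.castHom ℝ) * g⁻¹) hk
  rwa [trace_conj_pow hg, trace_map_pow, Fintype.card_fin, ← realConjNorm_eq_norm] at h

variable {p : ℕ} [Fact p.Prime]

lemma padicConjNorm_eq_norm (w : Matrix (Fin d) (Fin d) ℚ) (g : Matrix (Fin d) (Fin d) ℚ_[p]) :
    padicConjNorm w g = ‖g * w.map (Rat.castHom ℚ_[p]) * g⁻¹‖ :=
  iSup_norm_apply_eq_norm _

lemma padicNorm_trace_pow_le_padicConjNorm (w : Matrix (Fin d) (Fin d) ℚ)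
    {g : Matrix (Fin d) (Fin d) ℚ_[p]} (hg : IsUnit g.det) {k : ℕ} (hk : k ≠ 0) :
    (padicNorm p (w ^ k).trace : ℝ) ≤ padicConjNorm w g ^ k := by
  have h := norm_trace_pow_le_of_isUltrametricDist (g * w.map (Rat.castHom ℚ_[p]) * g⁻¹) hk
  rwa [trace_conj_pow hg, trace_map_pow, ← padicConjNorm_eq_norm, Rat.coe_castHom,
    Padic.eq_padicNorm] at h

lemma padicNorm_trace_pow_le_one {n : Type*} [Fintype n] [DecidableEq n] {w : Matrix n n ℚ}
    (hw : ∀ i j, padicNorm p (w i j) ≤ 1) {k : ℕ} (hk : k ≠ 0) :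
    padicNorm p (w ^ k).trace ≤ 1 := by
  have norm_map_le_one : ‖w.map (Rat.castHom ℚ_[p])‖ ≤ 1 :=
    (Matrix.norm_le_iff zero_le_one).2 fun i j ↦ by
      rw [Matrix.map_apply, Rat.coe_castHom, Padic.eq_padicNorm]
      exact_mod_cast hw i j
  have h := (norm_trace_pow_le_of_isUltrametricDist (w.map (Rat.castHom ℚ_[p])) hk).trans
    (pow_le_one₀ (norm_nonneg _) norm_map_le_one)
  rw [trace_map_pow, Rat.coe_castHom, Padic.eq_padicNorm] at h
  exact_mod_cast h

end ConjNorm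

section SInteger

lemma den_eq_one_of_forall_padicNorm_le_one {r : ℚ}
    (hr : ∀ p : ℕ, p.Prime → padicNorm p r ≤ 1) : r.den = 1 := by
  refine Nat.eq_one_iff_not_exists_prime_dvd.2 fun p hp ↦ ?_
  have : Fact p.Prime := ⟨hp⟩
  rw [← Rat.padicValuation_le_one_iff, ← Padic.norm_rat_le_one_iff_padicValuation_le_one,
    Padic.eq_padicNorm]
  exact_mod_cast hr p hp

lemma one_le_abs_of_forall_padicNorm_le_one {r : ℚ} (hr₀ : r ≠ 0)
    (hr : ∀ p : ℕ, p.Prime → padicNorm p r ≤ 1) : 1 ≤ |r| := by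
  rw [← Rat.coe_int_num_of_den_eq_one (den_eq_one_of_forall_padicNorm_le_one hr)]
  exact_mod_cast Int.one_le_abs (Rat.num_ne_zero.2 hr₀)

lemma padicNorm_padicNorm {p q : ℕ} [Fact p.Prime] [Fact q.Prime] {r : ℚ} (hr : r ≠ 0) :
    padicNorm q (padicNorm p r) = if p = q then (padicNorm p r)⁻¹ else 1 := by
  have map_zpow (n : ℤ) : padicNorm q ((p : ℚ) ^ n) = padicNorm q p ^ n :=
    map_zpow₀ (IsAbsoluteValue.abvHom (padicNorm q)) (p : ℚ) n
  rw [padicNorm.eq_zpow_of_nonzero hr, map_zpow]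
  split_ifs with hpq
  · subst hpq
    rw [padicNorm.padicNorm_p_of_prime, inv_zpow]
  · rw [padicNorm.padicNorm_of_prime_of_ne (Ne.symm hpq), one_zpow]

/-- Multiplying `r` by `padicNorm p r` cancels the power of `p` in `r` and changes its norm at no
other prime, so `r * ∏ p : S, padicNorm p r` is an integer. -/
lemma one_le_abs_mul_prod_padicNorm {S : Finset ℕ} [∀ p : S, Fact (p : ℕ).Prime] {r : ℚ}
    (hr₀ : r ≠ 0) (hr : ∀ q : ℕ, q.Prime → q ∉ S → padicNorm q r ≤ 1) :
    1 ≤ |r| * ∏ p : S, padicNorm p r := by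
  have padicNorm_pos (p : S) : 0 < padicNorm p r :=
    (padicNorm.nonneg r).lt_of_ne' (padicNorm.nonzero hr₀)
  have prod_pos : 0 < ∏ p : S, padicNorm p r := Finset.prod_pos fun p _ ↦ padicNorm_pos p
  rw [← abs_of_pos prod_pos, ← abs_mul]
  refine one_le_abs_of_forall_padicNorm_le_one (mul_ne_zero hr₀ prod_pos.ne') fun q hq ↦ ?_
  have : Fact q.Prime := ⟨hq⟩
  have padicNorm_prod : padicNorm q (∏ p : S, padicNorm p r) =
      ∏ p : S, if (p : ℕ) = q then (padicNorm p r)⁻¹ else 1 := by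
    simp only [← padicNorm_padicNorm hr₀]
    exact map_prod (IsAbsoluteValue.abvHom (padicNorm q)) _ _
  rw [padicNorm.mul, padicNorm_prod,
    Finset.prod_coe_sort S fun p ↦ if p = q then (padicNorm p r)⁻¹ else 1, Finset.prod_ite_eq']
  split_ifs with hqS
  · exact (mul_inv_cancel₀ (padicNorm_pos ⟨q, hqS⟩).ne').le
  · simpa using hr q hq hqS

end SInteger

theorem nilpotent_of_small_mahler_general {d : ℕ} {S : Finset ℕ} [∀ p : S, Fact (p : ℕ).Prime]
    {w : Matrix (Fin d) (Fin d) ℚ}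
    (hw : ∀ (i j : Fin d) (q : ℕ), q.Prime → q ∉ S → padicNorm q (w i j) ≤ 1)
    {g_inf : Matrix (Fin d) (Fin d) ℝ} (hg_inf : IsUnit g_inf.det)
    {g : ∀ p : S, Matrix (Fin d) (Fin d) ℚ_[p]} (hg : ∀ p, IsUnit (g p).det)
    (hlt : d * (realConjNorm w g_inf * ∏ p, padicConjNorm w (g p)) < 1) : IsNilpotent w := by
  refine isNilpotent_of_forall_trace_pow_eq_zero fun k hk ↦ by_contra fun htrace ↦ ?_
  have trace_integral : ∀ q : ℕ, q.Prime → q ∉ S → padicNorm q (w ^ k).trace ≤ 1 :=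
    fun q hq hqS ↦ by
      have : Fact q.Prime := ⟨hq⟩
      exact padicNorm_trace_pow_le_one (fun i j ↦ hw i j q hq hqS) hk
  have one_le : (1 : ℝ) ≤ |((w ^ k).trace : ℝ)| * ∏ p : S, (padicNorm p (w ^ k).trace : ℝ) :=
    mod_cast one_le_abs_mul_prod_padicNorm htrace trace_integral
  have realConjNorm_nonneg : 0 ≤ realConjNorm w g_inf := Real.iSup_nonneg fun _ ↦ abs_nonneg _
  have padicConjNorm_nonneg (p : S) : 0 ≤ padicConjNorm w (g p) :=
    Real.iSup_nonneg fun _ ↦ norm_nonneg _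
  refine one_le.not_gt ?_
  calc |((w ^ k).trace : ℝ)| * ∏ p : S, (padicNorm p (w ^ k).trace : ℝ)
      ≤ (d * realConjNorm w g_inf) ^ k * ∏ p : S, padicConjNorm w (g p) ^ k := by
        gcongr with p
        · exact Finset.prod_nonneg fun p _ ↦ mod_cast padicNorm.nonneg _
        · exact abs_trace_pow_le_realConjNorm w hg_inf hk
        · exact fun p _ ↦ mod_cast padicNorm.nonneg _
        · exact padicNorm_trace_pow_le_padicConjNorm w (hg p) hk
    _ = (d * (realConjNorm w g_inf * ∏ p, padicConjNorm w (g p))) ^ k := by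
        rw [Finset.prod_pow, ← mul_pow, mul_assoc]
    _ < 1 := pow_lt_one₀ (mul_nonneg d.cast_nonneg (mul_nonneg realConjNorm_nonneg
        (Finset.prod_nonneg fun p _ ↦ padicConjNorm_nonneg p))) hlt hk

/-- **Nilpotency from small S-arithmetic Mahler measure (Lemma in §6.5).**  There is a
constant `0 < β < 1` depending only on `d` such that: for every finite set
`S = {∞} ∪ Sf` of places of ℚ (with `Sf` a finite set of primes) and every `d × d` matrix
`w` with entries in the ring `ℤ_S` of `S`-integers, if there are `g_∞ ∈ SL_d(ℝ)` and
`g_p ∈ SL_d(ℚ_p)` for `p ∈ Sf` with `∏_{v ∈ S} ‖g_v w g_v⁻¹‖_v ≤ β`, then `w` is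
nilpotent. -/
theorem nilpotent_of_small_mahler (d : ℕ) (hd : 1 ≤ d) :
    ∃ β : ℝ, 0 < β ∧ β < 1 ∧
      ∀ (Sf : Finset ℕ) (hSf : ∀ p ∈ Sf, Nat.Prime p)
        (w : Matrix (Fin d) (Fin d) ℚ),
        (∀ (i j : Fin d) (q : ℕ), Nat.Prime q → q ∉ Sf → padicNorm q (w i j) ≤ 1) →
        ∀ (g_inf : Matrix (Fin d) (Fin d) ℝ)
          (g : (p : ℕ) → (hp : p ∈ Sf) →
            Matrix (Fin d) (Fin d) (@Padic p ⟨hSf p hp⟩)),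
          g_inf.det = 1 →
          (∀ (p : ℕ) (hp : p ∈ Sf), @padicDetOne d p ⟨hSf p hp⟩ (g p hp)) →
          realConjNorm w g_inf *
              ∏ p ∈ Sf.attach, @padicConjNorm d p.1 ⟨hSf p.1 p.2⟩ w (g p.1 p.2) ≤ β →
          IsNilpotent w := by
  refine ⟨((d : ℝ) + 1)⁻¹, by positivity,
    inv_lt_one_of_one_lt₀ (lt_add_of_pos_left 1 (Nat.cast_pos.2 hd)), ?_⟩
  intro Sf hSf w hw g_inf g hg_inf hg hle
  have : ∀ p : Sf, Fact (p : ℕ).Prime := fun p ↦ ⟨hSf p p.2⟩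
  refine nilpotent_of_small_mahler_general (g := fun p ↦ g p p.2) hw (hg_inf ▸ isUnit_one)
    (fun p ↦ (hg p p.2).symm ▸ isUnit_one) ?_
  calc _ ≤ (d : ℝ) * ((d : ℝ) + 1)⁻¹ := mul_le_mul_of_nonneg_left hle d.cast_nonneg
    _ < 1 := by rw [← div_eq_mul_inv, div_lt_one (by positivity)]; exact lt_add_one _
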